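/- arXiv:2605.19434 — 2 statements merged into one kernel-verified Lean document; each statement's English description precedes it below -/
import Mathlib

section
/- Let s ≥ 10. Let [a₁:b₁],…,[a_{s−2}:b_{s−2}] be pairwise distinct points of ℙ¹(K), giving s − 2 pairwise disjoint lines of one ruling of the smooth quadric Q = V(x₀x₃ − x₁x₂) ⊂ ℙ³ with ideals Pᵢ = (bᵢx₀ − aᵢx₁, bᵢx₂ − aᵢx₃), and let ℓ₁, ℓ₂ be two lines, neither contained in Q (i.e., x₀x₃ − x₁x₂ lies in neither of their ideals), such that all s lines λ₁,…,λ_{s−2}, ℓ₁, ℓ₂ are pairwise disjoint. Let M(C) be the Hartshorne–Rao module of the union C. Then dim_K [M(C)]_2 = 3s − 10 ≤ 4s − 20 = dim_K [M(C)]_3, and for every linear form L ∈ [R]₁ the multiplication map ×L : [M(C)]_2 → [M(C)]_3 is not injective; in particular M(C) fails the Weak Lefschetz Property from degree 2 to degree 3. -/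
/-!
Put `q = x₀x₃ - x₁x₂`. A form of degree at most three that vanishes on eight or more lines of one
ruling of `Q` vanishes on all of `Q`: every line of the other ruling meets all these lines, so the
form has too many zeros on it (`eval_segre`). By the Nullstellensatz such a form is a multiple of
`q` (`exists_eq_qf_mul`). If it also vanishes on two skew lines not contained in `Q`, the cofactor,
which is a constant or a linear form, vanishes on both of them and is therefore zero. Hence no
quadric or cubic contains the whole configuration, `[R]_t` embeds into `⊕ᵢ [R/Pᵢ]_t` for `t = 2, 3`,
and the two dimensions follow by counting (`finrank_HRcomp`).

For the failure of injectivity, one element of degree two is killed by every linear form: the class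
of the tuple that equals `q` on the last line and `0` on all others. Since the last two lines
`ℓ₁`, `ℓ₂` are skew, any linear form is `L = u + w` with `u` vanishing on `ℓ₁` and `w` on `ℓ₂`. The
cubic `u q` restricts to `0` on `Q` and on `ℓ₁`, and to `L q` on `ℓ₂`, so `L` times the class is zero.
The class itself is nonzero: a quadric inducing it would be `c q` with `c` constant, `c = 0` by
restriction to `ℓ₁`, and then `q` would vanish on `ℓ₂`.
-/


open MvPolynomial Module

noncomputable section

variable {K : Type} [Field K]

abbrev Rp (K : Type) [Field K] := MvPolynomial (Fin 4) K

/-- The ideal of the line `λ_{[a:b]}` of one ruling of the quadric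
`Q = V(x₀x₃ - x₁x₂)`. -/
def quadLine (a b : K) : Ideal (Rp K) :=
  Ideal.span {C b * X 0 - C a * X 1, C b * X 2 - C a * X 3}

/-- The product of the coordinate rings of the lines. -/
abbrev Dmod (K : Type) [Field K] {ι : Type} (P : ι → Ideal (Rp K)) :=
  (i : ι) → (Rp K ⧸ P i)

/-- The natural map `R → ⊕ᵢ R/Pᵢ`. -/
def Phi {ι : Type} (P : ι → Ideal (Rp K)) : Rp K →ₗ[Rp K] Dmod K P :=
  LinearMap.pi fun i => (P i).mkQ

/-- The Hartshorne–Rao module of the union of the (disjoint) lines with ideals `Pᵢ`: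
the cokernel of `R → ⊕ᵢ R/Pᵢ`. -/
abbrev HRmod {ι : Type} (P : ι → Ideal (Rp K)) :=
  Dmod K P ⧸ LinearMap.range (Phi P)

/-- The degree-`t` component `[M(C)]_t = coker([R]_t → ⊕ᵢ [R/Pᵢ]_t)` of the
Hartshorne–Rao module, realized as a `K`-subspace of the cokernel module. -/
def HRcomp {ι : Type} (P : ι → Ideal (Rp K)) (t : ℕ) : Submodule K (HRmod P) :=
  Submodule.map ((LinearMap.range (Phi P)).mkQ.restrictScalars K)
    (Submodule.pi Set.univ fun i =>
      Submodule.map (((P i).mkQ).restrictScalars K) (homogeneousSubmodule (Fin 4) K t))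

/-! ### Graded pieces of polynomial rings -/

lemma finrank_homog (n t : ℕ) :
    finrank K (homogeneousSubmodule (Fin n) K t) = (n + t - 1).choose t := by
  rw [homogeneousSubmodule_eq_finsupp_supported]
  have e : {d : Fin n →₀ ℕ | d.degree = t} ≃ Sym (Fin n) t :=
    (Equiv.subtypeEquivRight fun d => by
      simp [Finsupp.degree_eq_sum, Finsupp.sum_fintype]).trans (Sym.equivNatSum (Fin n) t).symm
  have h := (AddMonoidAlgebra.supportedEquivFinsupp (R := K) (S := K)
    {d : Fin n →₀ ℕ | d.degree = t}).finrank_eq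
  have : Fintype {d : Fin n →₀ ℕ | d.degree = t} := Fintype.ofEquiv _ e.symm
  refine h.trans ?_
  rw [finrank_finsupp_self, Fintype.card_congr e, Sym.card_sym_eq_choose, Fintype.card_fin]

instance (n t : ℕ) : Module.Finite K (homogeneousSubmodule (Fin n) K t) :=
  Module.Finite.iff_fg.mpr (homogeneousSubmodule_fg _ _ _)

/-- A linear map that raises degrees by `k` commutes with taking homogeneous components. -/
lemma homogComp_map {σ τ : Type*} (T : MvPolynomial σ K →ₗ[K] MvPolynomial τ K) (k : ℕ)
    (hT : ∀ n F, F ∈ homogeneousSubmodule σ K n → T F ∈ homogeneousSubmodule τ K (n + k))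
    (n : ℕ) (F : MvPolynomial σ K) :
    homogeneousComponent (n + k) (T F) = T (homogeneousComponent n F) := by
  conv_lhs => rw [← sum_homogeneousComponent F]
  rw [map_sum, map_sum]
  have h : ∀ i ∈ Finset.range (F.totalDegree + 1),
      homogeneousComponent (n + k) (T (homogeneousComponent i F)) =
      if n = i then T (homogeneousComponent n F) else 0 := by
    intro i _
    rw [homogeneousComponent_of_mem (hT i _ (homogeneousComponent_mem i F))]
    by_cases hi : n = i
    · subst hi; simp
    · simp [hi]
  rw [Finset.sum_congr rfl h, Finset.sum_ite_eq]
  split_ifs with h1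
  · rfl
  · rw [homogeneousComponent_eq_zero _ _ (by simpa [Nat.lt_succ_iff] using h1), map_zero]

/-! ### Forms of low degree vanishing on many lines of one ruling -/

/-- The quadratic form `x₀x₃ - x₁x₂` defining `Q`. -/
def qf (K : Type) [Field K] : Rp K := X 0 * X 3 - X 1 * X 2

lemma qf_homog : qf K ∈ homogeneousSubmodule (Fin 4) K 2 :=
  ((isHomogeneous_X K 0).mul (isHomogeneous_X K 3)).sub
    ((isHomogeneous_X K 1).mul (isHomogeneous_X K 2))

lemma qf_prime : Prime (qf K) := by
  rw [← UniqueFactorizationMonoid.irreducible_iff_prime]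
  -- Up to renaming and signs, `qf K` is the standard form `∑ cᵢ XᵢYᵢ` of rank four.
  have h := irreducible_sumSMulXSMulY
    (Finsupp.equivFunOnFinite.symm ![(1 : K), -1]) (n := Fin 2) (by
      refine ⟨0, ?_, 1, ?_, ?_⟩ <;> simp)
    (fun r hr => isUnit_of_dvd_one (hr 0))
  let e : Fin 2 ⊕ Fin 2 ≃ Fin 4 :=
    { toFun := Sum.elim ![0, 1] ![3, 2]
      invFun := ![.inl 0, .inl 1, .inr 1, .inr 0]
      left_inv := by intro x; rcases x with x | x <;> fin_cases x <;> rfl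
      right_inv := by intro x; fin_cases x <;> rfl }
  rw [← MulEquiv.irreducible_iff (renameEquiv K e)] at h
  have h2 (c : Fin 2 →₀ K) : sumSMulXSMulY c =
      Finsupp.linearCombination K (fun i => X (.inl i) * X (.inr i)) c := rfl
  have h3 : renameEquiv K e (sumSMulXSMulY (Finsupp.equivFunOnFinite.symm ![(1 : K), -1])) =
      qf K := by
    rw [h2, Finsupp.linearCombination_apply, Finsupp.sum_fintype _ _ (by simp)]
    simp [qf, e, sub_eq_add_neg]
  rw [h3] at h
  exact h

lemma eval_quadLine {a b : K} {F : Rp K} (hF : F ∈ quadLine a b) (u v : K) :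
    aeval ![u * a, u * b, v * a, v * b] F = 0 := by
  have : quadLine a b ≤ RingHom.ker (aeval ![u * a, u * b, v * a, v * b] : Rp K →ₐ[K] K) := by
    rw [quadLine, Ideal.span_le]
    rintro _ (rfl | rfl) <;> simp [RingHom.mem_ker] <;> ring
  exact this hF

lemma qf_mem_quadLine {a b : K} (h : (a, b) ≠ (0, 0)) : qf K ∈ quadLine a b := by
  have key : ∀ c : K, c ≠ 0 → C c * qf K ∈ quadLine a b → qf K ∈ quadLine a b := by
    intro c hc hm
    have := Ideal.mul_mem_left _ (C c⁻¹) hm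
    rwa [← mul_assoc, ← C_mul, inv_mul_cancel₀ hc, C_1, one_mul] at this
  by_cases hb : b = 0
  · refine key a (fun ha => h (by rw [ha, hb])) (Ideal.mem_span_pair.mpr ⟨X 2, -X 0, ?_⟩)
    rw [qf]
    ring
  · refine key b hb (Ideal.mem_span_pair.mpr ⟨X 3, -X 1, ?_⟩)
    rw [qf]
    ring

/-- A form of degree `t` that vanishes on more than `t + 1` lines of one ruling vanishes on `Q`.
The point `(ux, uy, vx, vy)` of `Q` lies on a line of the other ruling, which meets each of the
given lines; restricted to it, the form has more than `t` zeros. -/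
lemma eval_segre {N : ℕ} (a b : Fin (N + 1) → K)
    (hnz : ∀ i, (a i, b i) ≠ (0, 0))
    (hdist : ∀ i j, i ≠ j → a i * b j - a j * b i ≠ 0)
    {t : ℕ} (ht : t < N) {F : Rp K} (hF : F ∈ homogeneousSubmodule (Fin 4) K t)
    (hP : ∀ i, F ∈ quadLine (a i) (b i)) (x y u v : K) :
    aeval ![u * x, u * y, v * x, v * y] F = 0 := by
  have hN : ∀ i c, x = c * a i → y = c * b i → aeval ![u * x, u * y, v * x, v * y] F = 0 := by
    rintro i c rfl rfl
    have := eval_quadLine (hP i) (u * c) (v * c)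
    simpa only [mul_assoc] using this
  -- If the point already lies on the line of index `0` nothing is left to prove; otherwise that
  -- line supplies the second point needed to parametrize the transversal line by `T`.
  by_cases h0 : x * b 0 - y * a 0 = 0
  · by_cases ha : a 0 = 0
    · have hb : b 0 ≠ 0 := fun hb => hnz 0 (by simp [ha, hb])
      refine hN 0 (y / b 0) ?_ (by field_simp)
      simpa [ha, hb] using h0
    · refine hN 0 (x / a 0) (by field_simp) ?_
      field_simp; linear_combination -h0
  let p : Polynomial K := aeval (![Polynomial.C (u * x) + Polynomial.C (u * a 0) * Polynomial.X,
    Polynomial.C (u * y) + Polynomial.C (u * b 0) * Polynomial.X,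
    Polynomial.C (v * x) + Polynomial.C (v * a 0) * Polynomial.X,
    Polynomial.C (v * y) + Polynomial.C (v * b 0) * Polynomial.X]) F
  have hev : ∀ T, p.eval T =
      aeval ![u * (x + T * a 0), u * (y + T * b 0), v * (x + T * a 0), v * (y + T * b 0)] F := by
    intro T
    have : (Polynomial.aeval T).comp (aeval
          (![Polynomial.C (u * x) + Polynomial.C (u * a 0) * Polynomial.X,
            Polynomial.C (u * y) + Polynomial.C (u * b 0) * Polynomial.X,
            Polynomial.C (v * x) + Polynomial.C (v * a 0) * Polynomial.X,
            Polynomial.C (v * y) + Polynomial.C (v * b 0) * Polynomial.X]) :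
          Rp K →ₐ[K] Polynomial K) =
        aeval ![u * (x + T * a 0), u * (y + T * b 0), v * (x + T * a 0), v * (y + T * b 0)] := by
      ext i
      fin_cases i <;> simp <;> ring
    simpa [p, Polynomial.coe_aeval_eq_eval] using DFunLike.congr_fun this F
  have hdeg : p.natDegree ≤ t * 1 := by
    apply aeval_natDegree_le _ hF.totalDegree_le
    intro i
    fin_cases i <;> simp <;> compute_degree
  -- `T i` is the parameter of the intersection with the line of index `i + 1`.
  let T : Fin N → K := fun i =>
    -(x * b i.succ - y * a i.succ) / (a 0 * b i.succ - a i.succ * b 0)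
  have hd0 : ∀ i : Fin N, a 0 * b i.succ - a i.succ * b 0 ≠ 0 := fun i =>
    hdist 0 i.succ (Fin.succ_ne_zero i).symm
  have hT : ∀ i, (x + T i * a 0) * b i.succ - (y + T i * b 0) * a i.succ = 0 := by
    intro i
    have := hd0 i
    simp only [T]
    rw [neg_div, add_mul, add_mul, neg_mul, neg_mul, neg_mul, neg_mul]
    linear_combination (-(x * b i.succ - y * a i.succ)) * (div_self this)
  have hTinj : Function.Injective T := by
    intro i j hij
    by_contra hne
    have h1 := hT i
    have h2 := hT j
    rw [← hij] at h2
    have hd := hdist i.succ j.succ (by simpa using hne)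
    have hx : x + T i * a 0 = 0 := by
      apply (mul_eq_zero.mp (_ : _ * (a i.succ * b j.succ - a j.succ * b i.succ) = 0)).resolve_right hd
      linear_combination a i.succ * h2 - a j.succ * h1
    have hy : y + T i * b 0 = 0 := by
      apply (mul_eq_zero.mp (_ : _ * (a i.succ * b j.succ - a j.succ * b i.succ) = 0)).resolve_right hd
      linear_combination b i.succ * h2 - b j.succ * h1
    apply h0
    linear_combination b 0 * hx - a 0 * hy
  have hroot : ∀ i, p.eval (T i) = 0 := by
    intro i
    rw [hev]
    have h := hT i
    by_cases ha : a i.succ = 0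
    · have hb : b i.succ ≠ 0 := fun hb => hnz i.succ (by simp [ha, hb])
      have hx : x + T i * a 0 = 0 := by simpa [ha, hb] using h
      have := eval_quadLine (hP i.succ) (u * ((y + T i * b 0) / b i.succ))
        (v * ((y + T i * b 0) / b i.succ))
      convert this using 3
      ext k
      fin_cases k <;> simp [ha, hb, hx, mul_assoc]
    · have hy : y + T i * b 0 = (x + T i * a 0) / a i.succ * b i.succ := by
        field_simp; linear_combination -h
      have := eval_quadLine (hP i.succ) (u * ((x + T i * a 0) / a i.succ))
        (v * ((x + T i * a 0) / a i.succ))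
      convert this using 3
      ext k
      fin_cases k <;> simp [ha, hy, mul_assoc]
  have hp : p = 0 := by
    apply Polynomial.eq_zero_of_natDegree_lt_card_of_eval_eq_zero p hTinj hroot
    simp; omega
  have := hev 0
  simpa [hp] using this.symm

/-- A form of small degree vanishing on many lines of one ruling is divisible by
`x₀x₃ - x₁x₂`: it vanishes on `Q` by `eval_segre`, and the ideal of `Q` is prime, so the
Nullstellensatz applies. -/
lemma exists_eq_qf_mul [IsAlgClosed K] {N : ℕ} (a b : Fin (N + 1) → K)
    (hnz : ∀ i, (a i, b i) ≠ (0, 0))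
    (hdist : ∀ i j, i ≠ j → a i * b j - a j * b i ≠ 0)
    {t : ℕ} (ht : t + 2 < N) {F : Rp K} (hF : F ∈ homogeneousSubmodule (Fin 4) K (t + 2))
    (hP : ∀ i, F ∈ quadLine (a i) (b i)) :
    ∃ G ∈ homogeneousSubmodule (Fin 4) K t, F = qf K * G := by
  have hmem : F ∈ vanishingIdeal K (zeroLocus K (Ideal.span {qf K})) := by
    intro x hx
    have hq : x 0 * x 3 = x 1 * x 2 := by
      have := hx _ (Ideal.mem_span_singleton_self _)
      simpa [qf, sub_eq_zero] using this
    -- The point is a `2 × 2` matrix of rank at most one, hence a product of a column and a row.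
    obtain ⟨c, d, u, v, rfl⟩ : ∃ c d u v, x = ![u * c, u * d, v * c, v * d] := by
      by_cases h0 : x 0 = 0
      · by_cases h1 : x 1 = 0
        · exact ⟨x 2, x 3, 0, 1, by ext k; fin_cases k <;> simp [h0, h1]⟩
        · have h2 : x 2 = 0 := by simpa [h0, h1] using hq.symm
          exact ⟨x 0, x 1, 1, x 3 / x 1, by ext k; fin_cases k <;> simp [h0, h1, h2]⟩
      · refine ⟨x 0, x 1, 1, x 2 / x 0, ?_⟩
        ext k; fin_cases k <;> simp [h0]
        field_simp; linear_combination hq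
    exact eval_segre a b hnz hdist ht hF hP c d u v
  have hprime : (Ideal.span {qf K}).IsPrime :=
    (Ideal.span_singleton_prime qf_prime.ne_zero).mpr qf_prime
  rw [vanishingIdeal_zeroLocus_eq_radical, hprime.radical, Ideal.mem_span_singleton] at hmem
  obtain ⟨G, rfl⟩ := hmem
  refine ⟨homogeneousComponent t G, homogeneousComponent_mem t G, ?_⟩
  have := homogComp_map (LinearMap.mulLeft K (qf K)) 2 (fun n F hF => by
    rw [add_comm]; exact qf_homog.mul hF) t G
  rw [LinearMap.mulLeft_apply, LinearMap.mulLeft_apply] at this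
  rw [← this, homogeneousComponent_of_mem hF, if_pos rfl]

/-! ### Coordinate rings of lines -/

/-- `P` is the ideal of a line, expressed through a parametrization: `φ` is the restriction of
forms to the line, identified with `ℙ¹`, and `σ` is a degree-preserving section of `φ`. -/
def IsLine (P : Ideal (Rp K)) : Prop :=
  ∃ (φ : Rp K →ₐ[K] MvPolynomial (Fin 2) K) (σ : MvPolynomial (Fin 2) K →ₐ[K] Rp K),
    (∀ t F, F ∈ homogeneousSubmodule (Fin 4) K t → φ F ∈ homogeneousSubmodule (Fin 2) K t) ∧
    (∀ t g, g ∈ homogeneousSubmodule (Fin 2) K t → σ g ∈ homogeneousSubmodule (Fin 4) K t) ∧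
    (∀ g, φ (σ g) = g) ∧ RingHom.ker φ = P

/-- If `v 0, …, v 3` span the linear forms then they are a basis, so `(v 0, v 1)` is the ideal of a
line, on which `v 2` and `v 3` restrict to homogeneous coordinates. The third part says that the
linear forms of this ideal are the obvious ones. -/
lemma line_facts (v : Fin 4 → Rp K)
    (hv : Submodule.span K (Set.range v) = homogeneousSubmodule (Fin 4) K 1) :
    LinearIndependent K v ∧ IsLine (Ideal.span {v 0, v 1}) ∧
    ∀ L ∈ homogeneousSubmodule (Fin 4) K 1, L ∈ Ideal.span {v 0, v 1} →
      ∃ α β : K, L = α • v 0 + β • v 1 := by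
  have hv1 : ∀ i, v i ∈ homogeneousSubmodule (Fin 4) K 1 := fun i =>
    hv ▸ Submodule.subset_span ⟨i, rfl⟩
  have hli : LinearIndependent K v := by
    rw [linearIndependent_iff_card_eq_finrank_span, Set.finrank, hv, finrank_homog]
    rfl
  let B : Basis (Fin 4) K (homogeneousSubmodule (Fin 4) K 1) :=
    (Basis.span hli).map (LinearEquiv.ofEq _ _ hv)
  have hB : ∀ i, (B i : Rp K) = v i := by
    intro i
    simp [B, Basis.span_apply]
  let x : Fin 4 → homogeneousSubmodule (Fin 4) K 1 := fun i => ⟨X i, isHomogeneous_X K i⟩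
  let φ : Rp K →ₐ[K] MvPolynomial (Fin 2) K :=
    aeval fun i => B.repr (x i) 2 • X 0 + B.repr (x i) 3 • X 1
  let σ : MvPolynomial (Fin 2) K →ₐ[K] Rp K := aeval ![v 2, v 3]
  have hφL : ∀ L : homogeneousSubmodule (Fin 4) K 1,
      φ L = B.repr L 2 • X 0 + B.repr L 3 • X 1 := by
    intro L
    let f : homogeneousSubmodule (Fin 4) K 1 →ₗ[K] MvPolynomial (Fin 2) K :=
      ((Finsupp.lapply 2).comp B.repr.toLinearMap).smulRight (X 0) +
      ((Finsupp.lapply 3).comp B.repr.toLinearMap).smulRight (X 1)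
    have hspan : Submodule.span K (Set.range x) = ⊤ := by
      apply Submodule.map_injective_of_injective
        (Submodule.subtype_injective (homogeneousSubmodule (Fin 4) K 1))
      rw [Submodule.map_span, Submodule.map_top, Submodule.range_subtype, ← Set.range_comp]
      exact homogeneousSubmodule_one_eq_span_X.symm
    have : φ.toLinearMap.comp (Submodule.subtype _) = f := by
      apply LinearMap.ext_on_range hspan
      intro i
      simp [f, φ, x]
    exact DFunLike.congr_fun this L
  have hφv : ∀ i, φ (v i) = (if i = 2 then X 0 else 0) + (if i = 3 then X 1 else 0) := by
    intro i
    rw [← hB, hφL]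
    simp [Finsupp.single_apply]
  have hker : RingHom.ker φ = Ideal.span {v 0, v 1} := by
    apply le_antisymm
    · -- Modulo `(v 0, v 1)` the composite `σ ∘ φ` is the identity: it suffices to see it on `X i`.
      have key : ∀ F : Rp K, F - σ (φ F) ∈ Ideal.span {v 0, v 1} := by
        intro F
        rw [← Ideal.Quotient.mk_eq_mk_iff_sub_mem]
        have : (Ideal.Quotient.mkₐ K (Ideal.span {v 0, v 1})) =
            (Ideal.Quotient.mkₐ K (Ideal.span {v 0, v 1})).comp (σ.comp φ) := by
          ext i
          have hx : (X i : Rp K) = ∑ j, B.repr (x i) j • v j := by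
            have := congrArg Subtype.val (B.sum_repr (x i))
            simp only [AddSubmonoidClass.coe_finsetSum, Submodule.coe_smul, hB] at this
            exact this.symm
          have h1 : σ (φ (X i)) = B.repr (x i) 2 • v 2 + B.repr (x i) 3 • v 3 := by
            simp [φ, σ]
          change Ideal.Quotient.mk _ (X i) = Ideal.Quotient.mk _ (σ (φ (X i)))
          rw [Ideal.Quotient.mk_eq_mk_iff_sub_mem, h1, hx, Fin.sum_univ_four]
          have : ∀ p q r s : Rp K, p + q + r + s - (r + s) = p + q := by intros; ring
          rw [this, Algebra.smul_def, Algebra.smul_def]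
          exact add_mem (Ideal.mul_mem_left _ _ (Ideal.subset_span (by simp)))
            (Ideal.mul_mem_left _ _ (Ideal.subset_span (by simp)))
        exact DFunLike.congr_fun this F
      intro F hF
      have := key F
      rwa [(RingHom.mem_ker).mp hF, map_zero, sub_zero] at this
    · rw [Ideal.span_le]
      rintro _ (rfl | rfl) <;> simp [RingHom.mem_ker, hφv]
  refine ⟨hli, ⟨φ, σ, ?_, ?_, ?_, hker⟩, ?_⟩
  · intro t F hF
    have := IsHomogeneous.aeval hF (fun i => B.repr (x i) 2 • X 0 + B.repr (x i) 3 • X 1 :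
      Fin 4 → MvPolynomial (Fin 2) K) (n := 1) (fun i =>
        add_mem (Submodule.smul_mem (homogeneousSubmodule (Fin 2) K 1) _ (isHomogeneous_X K 0))
          (Submodule.smul_mem (homogeneousSubmodule (Fin 2) K 1) _ (isHomogeneous_X K 1)))
    rwa [one_mul] at this
  · intro t F hF
    have := IsHomogeneous.aeval hF ![v 2, v 3] (n := 1) (fun i => by
      fin_cases i
      · exact hv1 2
      · exact hv1 3)
    rwa [one_mul] at this
  · intro g
    have : φ.comp σ = AlgHom.id K _ := by
      ext i
      fin_cases i <;> simp [σ, hφv]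
    exact DFunLike.congr_fun this g
  · intro L hL hLP
    rw [← hker, RingHom.mem_ker, hφL ⟨L, hL⟩] at hLP
    have h2 : B.repr ⟨L, hL⟩ 2 = 0 := by
      simpa using congrArg (aeval ![(1 : K), 0]) hLP
    have h3 : B.repr ⟨L, hL⟩ 3 = 0 := by
      simpa using congrArg (aeval ![(0 : K), 1]) hLP
    have := congrArg Subtype.val (B.sum_repr ⟨L, hL⟩)
    rw [Fin.sum_univ_four, h2, h3] at this
    simp only [zero_smul, add_zero, Submodule.coe_add, Submodule.coe_smul, hB] at this
    exact ⟨_, _, this.symm⟩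

lemma IsLine.homogeneousComponent_mem {P : Ideal (Rp K)} (hP : IsLine P) {F : Rp K} (hF : F ∈ P)
    (t : ℕ) : homogeneousComponent t F ∈ P := by
  obtain ⟨φ, σ, hφ, hσ, hs, rfl⟩ := hP
  have := homogComp_map φ.toLinearMap 0 (fun n F hF => hφ n F hF) t F
  rw [AlgHom.toLinearMap_apply, AlgHom.toLinearMap_apply, (RingHom.mem_ker).mp hF, map_zero] at this
  exact this.symm

lemma IsLine.isPrime {P : Ideal (Rp K)} (hP : IsLine P) : P.IsPrime := by
  obtain ⟨φ, σ, hφ, hσ, hs, rfl⟩ := hP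
  exact RingHom.ker_isPrime _

/-- The degree-`t` part of the coordinate ring `R/P`. -/
def gr (P : Ideal (Rp K)) (t : ℕ) : Submodule K (Rp K ⧸ P) :=
  Submodule.map (P.mkQ.restrictScalars K) (homogeneousSubmodule (Fin 4) K t)

instance (P : Ideal (Rp K)) (t : ℕ) : Module.Finite K (gr P t) := by
  unfold gr; infer_instance

instance (P : Ideal (Rp K)) (t : ℕ) : Module.Free K (gr P t) :=
  Module.Free.of_divisionRing K _

lemma IsLine.finrank_gr {P : Ideal (Rp K)} (hP : IsLine P) (t : ℕ) :
    finrank K (gr P t) = t + 1 := by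
  obtain ⟨φ, σ, hφ, hσ, hs, rfl⟩ := hP
  let f : MvPolynomial (Fin 2) K →ₗ[K] (Rp K ⧸ RingHom.ker φ) :=
    ((RingHom.ker φ).mkQ.restrictScalars K).comp σ.toLinearMap
  have hf : Function.Injective f := by
    rw [injective_iff_map_eq_zero]
    intro g hg
    have : σ g ∈ RingHom.ker φ := by
      simpa [f, Ideal.Quotient.eq_zero_iff_mem] using hg
    rwa [RingHom.mem_ker, hs] at this
  have : gr (RingHom.ker φ) t = (homogeneousSubmodule (Fin 2) K t).map f := by
    apply le_antisymm
    · rintro _ ⟨F, hF, rfl⟩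
      refine ⟨φ F, hφ t F hF, ?_⟩
      change Submodule.Quotient.mk _ = Submodule.Quotient.mk _
      rw [Submodule.Quotient.eq]
      simp [RingHom.mem_ker, hs]
    · rintro _ ⟨g, hg, rfl⟩
      exact ⟨σ g, hσ t g hg, rfl⟩
  rw [this, ← (Submodule.equivMapOfInjective f hf _).finrank_eq, finrank_homog]
  have : 2 + t - 1 = t + 1 := by omega
  rw [this, Nat.choose_succ_self_right]

/-! ### Dimensions of graded pieces of the Hartshorne–Rao module -/

/-- If no nonzero form of degree `t` vanishes on all lines, then `[R]_t` embeds in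
`⊕ᵢ [R/Pᵢ]_t`, so `dim [M(C)]_t + dim [R]_t` is the number of lines times `t + 1`. -/
lemma finrank_HRcomp {ι : Type} [Fintype ι] (P : ι → Ideal (Rp K))
    (hP : ∀ i, IsLine (P i))
    (t : ℕ) (h0 : ∀ F ∈ homogeneousSubmodule (Fin 4) K t, (∀ i, F ∈ P i) → F = 0) :
    finrank K (HRcomp P t) + (t + 3).choose t = Fintype.card ι * (t + 1) := by
  let D : Submodule K (Dmod K P) := Submodule.pi Set.univ fun i => gr (P i) t
  let e : D ≃ₗ[K] (Π i, gr (P i) t) :=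
    { toFun := fun x i => ⟨x.1 i, x.2 i trivial⟩
      invFun := fun x => ⟨fun i => (x i).1, fun i _ => (x i).2⟩
      map_add' := fun _ _ => rfl
      map_smul' := fun _ _ => rfl
      left_inv := fun _ => rfl
      right_inv := fun _ => rfl }
  have : Module.Finite K D := Module.Finite.equiv e.symm
  have hD : finrank K D = Fintype.card ι * (t + 1) := by
    rw [e.finrank_eq, finrank_pi_fintype, Finset.sum_congr rfl fun i _ => (hP i).finrank_gr t]
    simp
  let π : Dmod K P →ₗ[K] HRmod P := (LinearMap.range (Phi P)).mkQ.restrictScalars K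
  have h1 := LinearMap.finrank_range_add_finrank_ker (K := K) (V := D) (V₂ := HRmod P)
    (π.domRestrict D)
  have h2 : LinearMap.range (π.domRestrict D) = HRcomp P t := by
    rw [LinearMap.range_domRestrict]; rfl
  let ψ : homogeneousSubmodule (Fin 4) K t →ₗ[K] D :=
    (((Phi P).restrictScalars K).domRestrict _).codRestrict D
      (fun F i _ => ⟨F, F.2, rfl⟩)
  have hψ : Function.Injective ψ := by
    rw [injective_iff_map_eq_zero]
    intro F hF
    apply Subtype.ext
    apply h0 F F.2
    intro i
    have := congrFun (congrArg Subtype.val hF) i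
    exact Ideal.Quotient.eq_zero_iff_mem.mp this
  have h3 : LinearMap.range ψ = LinearMap.ker (π.domRestrict D) := by
    apply le_antisymm
    · rintro _ ⟨F, rfl⟩
      rw [LinearMap.mem_ker]
      exact (Submodule.Quotient.mk_eq_zero _).mpr ⟨F.1, rfl⟩
    · -- The ideals are homogeneous, so a preimage of an element of degree `t` can be replaced by
      -- its component of degree `t`.
      intro x hx
      obtain ⟨F, hF⟩ := (Submodule.Quotient.mk_eq_zero _).mp (LinearMap.mem_ker.mp hx)
      refine ⟨⟨homogeneousComponent t F, homogeneousComponent_mem t F⟩, ?_⟩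
      apply Subtype.ext
      funext i
      obtain ⟨G, hG, hGx⟩ := x.2 i trivial
      have hFi : Ideal.Quotient.mk (P i) F = x.1 i := congrFun hF i
      have hGi : Ideal.Quotient.mk (P i) G = x.1 i := hGx
      rw [← hGi, Ideal.Quotient.mk_eq_mk_iff_sub_mem] at hFi
      have := (hP i).homogeneousComponent_mem hFi t
      rw [map_sub, homogeneousComponent_of_mem hG, if_pos rfl,
        ← Ideal.Quotient.mk_eq_mk_iff_sub_mem] at this
      rw [← hGi, ← this]
      rfl
  rw [h2, ← h3, LinearMap.finrank_range_of_inj hψ, finrank_homog, hD] at h1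
  rw [← h1]
  congr 2
  omega

/-! ### The configuration of `n` lines on `Q` and two lines off `Q` -/

/-- The theorem with `n = s - 2` lines on `Q`, which avoids truncated subtraction in index types. -/
lemma stmt_aux [IsAlgClosed K]
    (n : ℕ) (hn : 8 ≤ n) (a b : Fin n → K)
    (hnz : ∀ i, (a i, b i) ≠ (0, 0))
    (hdist : ∀ i j, i ≠ j → a i * b j - a j * b i ≠ 0)
    (m m' : Fin 2 → Rp K)
    (hnotQ : ∀ j, (X 0 * X 3 - X 1 * X 2 : Rp K) ∉ Ideal.span {m j, m' j})
    (hskew1 : ∀ i j, Submodule.span K {C (b i) * X 0 - C (a i) * X 1,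
        C (b i) * X 2 - C (a i) * X 3, m j, m' j} = homogeneousSubmodule (Fin 4) K 1)
    (hskew2 : ∀ j j', j ≠ j' → Submodule.span K {m j, m' j, m j', m' j'} =
        homogeneousSubmodule (Fin 4) K 1)
    (P : Fin n ⊕ Fin 2 → Ideal (Rp K))
    (hPdef : P = Sum.elim (fun i => quadLine (a i) (b i)) (fun j => Ideal.span {m j, m' j})) :
    finrank K (HRcomp P 2) = 3 * (n + 2) - 10 ∧ finrank K (HRcomp P 3) = 4 * (n + 2) - 20 ∧
    ∀ L ∈ homogeneousSubmodule (Fin 4) K 1, ∃ x ∈ HRcomp P 2, x ≠ 0 ∧ L • x = 0 := by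
  obtain ⟨N, rfl⟩ : ∃ N, n = N + 1 := ⟨n - 1, by omega⟩
  have hPl : ∀ i, P (.inl i) = quadLine (a i) (b i) := fun i => by rw [hPdef]; rfl
  have hPr : ∀ j, P (.inr j) = Ideal.span {m j, m' j} := fun j => by rw [hPdef]; rfl
  have hQ : ∀ j, qf K ∉ P (.inr j) := fun j => by rw [hPr]; exact hnotQ j
  have hrange : ∀ p q r s : Rp K, Set.range ![p, q, r, s] = {p, q, r, s} := fun p q r s => by
    ext z
    simp [eq_comm]
    tauto
  obtain ⟨hli, hl0, hlin0⟩ := line_facts ![m 0, m' 0, m 1, m' 1]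
    (by rw [hrange]; exact hskew2 0 1 (by decide))
  obtain ⟨-, hl1, hlin1⟩ := line_facts ![m 1, m' 1, m 0, m' 0]
    (by rw [hrange]; exact hskew2 1 0 (by decide))
  have hline : ∀ i, IsLine (P i) := by
    rintro (i | j)
    · rw [hPl]
      exact (line_facts ![C (b i) * X 0 - C (a i) * X 1, C (b i) * X 2 - C (a i) * X 3, m 0, m' 0]
        (by rw [hrange]; exact hskew1 i 0)).2.1
    · rw [hPr]
      fin_cases j
      · exact hl0
      · exact hl1
  -- Skewness of the two extra lines: no nonzero linear form vanishes on both.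
  have hlin : ∀ L ∈ homogeneousSubmodule (Fin 4) K 1, L ∈ P (.inr 0) → L ∈ P (.inr 1) → L = 0 := by
    intro L hL h0 h1
    rw [hPr] at h0 h1
    obtain ⟨α, β, h⟩ := hlin0 L hL h0
    obtain ⟨γ, δ, h'⟩ := hlin1 L hL h1
    have hz := Fintype.linearIndependent_iff.mp hli ![α, β, -γ, -δ] (by
      simp only [Fin.sum_univ_four, Matrix.cons_val, Matrix.cons_val_zero, Matrix.cons_val_one,
        neg_smul] at h h' ⊢
      rw [← h, add_assoc, ← neg_add, ← h', add_neg_cancel])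
    have hα : α = 0 := hz 0
    have hβ : β = 0 := hz 1
    rw [h, hα, hβ, zero_smul, zero_smul, add_zero]
  have hconst : ∀ (j) (G : Rp K), G ∈ homogeneousSubmodule (Fin 4) K 0 → qf K * G ∈ P (.inr j) →
      G = 0 := by
    intro j G hG h
    obtain ⟨c, rfl⟩ : ∃ c, G = C c :=
      ⟨_, (totalDegree_eq_zero_iff_eq_C (p := G)).mp (Nat.le_zero.mp hG.totalDegree_le)⟩
    by_contra hc
    have hc' : c ≠ 0 := fun h => hc (by rw [h, C_0])
    have := Ideal.mul_mem_right (C c⁻¹) _ h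
    rw [mul_assoc, ← C_mul, mul_inv_cancel₀ hc', C_1, mul_one] at this
    exact hQ j this
  have h2 : ∀ F ∈ homogeneousSubmodule (Fin 4) K 2, (∀ i, F ∈ P i) → F = 0 := by
    intro F hF hFP
    obtain ⟨G, hG, rfl⟩ := exists_eq_qf_mul a b hnz hdist (t := 0) (by omega) hF
      (fun i => hPl i ▸ hFP (.inl i))
    rw [hconst 0 G hG (hFP _), mul_zero]
  have h3 : ∀ F ∈ homogeneousSubmodule (Fin 4) K 3, (∀ i, F ∈ P i) → F = 0 := by
    intro F hF hFP
    obtain ⟨G, hG, rfl⟩ := exists_eq_qf_mul a b hnz hdist (t := 1) (by omega) hF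
      (fun i => hPl i ▸ hFP (.inl i))
    have h : ∀ j, G ∈ P (.inr j) := fun j =>
      ((hline (.inr j)).isPrime.mem_or_mem (hFP (.inr j))).resolve_left (hQ j)
    rw [hlin G hG (h 0) (h 1), mul_zero]
  have hd2 := finrank_HRcomp P hline 2 h2
  have hd3 := finrank_HRcomp P hline 3 h3
  have e2 : (2 + 3).choose 2 = 10 := rfl
  have e3 : (3 + 3).choose 3 = 20 := rfl
  simp only [Fintype.card_sum, Fintype.card_fin] at hd2 hd3
  rw [e2] at hd2
  rw [e3] at hd3
  refine ⟨by omega, by omega, fun L hL => ?_⟩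
  -- The kernel element: `x₀x₃ - x₁x₂` on the second extra line and `0` on all other lines.
  let f : Fin (N + 1) ⊕ Fin 2 → Rp K := Sum.elim (fun _ => 0) ![0, qf K]
  have hf : ∀ i, f i ∈ homogeneousSubmodule (Fin 4) K 2 := by
    rintro (i | j)
    · exact zero_mem _
    · fin_cases j
      · exact zero_mem _
      · exact qf_homog
  let y : Dmod K P := fun i => (P i).mkQ (f i)
  refine ⟨(LinearMap.range (Phi P)).mkQ y, ⟨y, fun i _ => ⟨f i, hf i, rfl⟩, rfl⟩, ?_, ?_⟩
  · intro h0
    obtain ⟨F, hF⟩ := (Submodule.Quotient.mk_eq_zero _).mp h0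
    have hFi : ∀ i, homogeneousComponent 2 F - f i ∈ P i := by
      intro i
      have hi : Ideal.Quotient.mk (P i) F = Ideal.Quotient.mk (P i) (f i) := congrFun hF i
      rw [Ideal.Quotient.mk_eq_mk_iff_sub_mem] at hi
      have := (hline i).homogeneousComponent_mem hi 2
      rwa [map_sub, homogeneousComponent_of_mem (hf i), if_pos rfl] at this
    obtain ⟨G, hG, hFG⟩ := exists_eq_qf_mul a b hnz hdist (t := 0) (by omega)
      (homogeneousComponent_mem 2 F) (fun i => by simpa [f, hPl] using hFi (.inl i))
    have hz : G = 0 := hconst 0 G hG (by rw [← hFG]; simpa [f] using hFi (.inr 0))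
    have hq := hFi (.inr 1)
    rw [hFG, hz] at hq
    exact hQ 1 (by simpa [f] using hq)
  · -- Write `L = u + w` with `u`, `w` vanishing on the two extra lines; then `u * q` maps to `L • y`.
    obtain ⟨u, hu, w, hw, rfl⟩ : ∃ u ∈ P (.inr 0), ∃ w ∈ P (.inr 1), L = u + w := by
      rw [← hskew2 0 1 (by decide)] at hL
      simp only [Submodule.mem_span_insert, Submodule.mem_span_singleton] at hL
      obtain ⟨α, _, ⟨β, _, ⟨γ, _, ⟨δ, rfl⟩, rfl⟩, rfl⟩, rfl⟩ := hL
      refine ⟨α • m 0 + β • m' 0, ?_, γ • m 1 + δ • m' 1, ?_, by ring⟩ <;>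
      · rw [hPr, Algebra.smul_def, Algebra.smul_def]
        exact add_mem (Ideal.mul_mem_left _ _ (Ideal.subset_span (by simp)))
          (Ideal.mul_mem_left _ _ (Ideal.subset_span (by simp)))
    rw [← map_smul]
    refine (Submodule.Quotient.mk_eq_zero _).mpr ⟨u * qf K, ?_⟩
    funext i
    change Ideal.Quotient.mk (P i) (u * qf K) = Ideal.Quotient.mk (P i) ((u + w) * f i)
    rw [Ideal.Quotient.mk_eq_mk_iff_sub_mem]
    rcases i with i | j
    · have hqi : qf K ∈ P (.inl i) := by
        rw [hPl]
        exact qf_mem_quadLine (hnz i)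
      simpa [f] using Ideal.mul_mem_left _ u hqi
    · fin_cases j
      · simpa [f] using Ideal.mul_mem_right (qf K) _ hu
      · have : u * qf K - (u + w) * f (.inr 1) = -(w * qf K) := by
          have hf1 : f (.inr 1) = qf K := rfl
          rw [hf1]
          ring
        exact this ▸ neg_mem (Ideal.mul_mem_right (qf K) _ hw)

/-- Let `s ≥ 10`. For `s - 2` pairwise disjoint lines of one ruling of the smooth
quadric `Q = V(x₀x₃ - x₁x₂)` together with two further lines, neither on `Q`, such
that all `s` lines are pairwise disjoint, the Hartshorne–Rao module `M(C)` of the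
union satisfies `dim [M(C)]₂ = 3s - 10 ≤ 4s - 20 = dim [M(C)]₃`, and for every
linear form `L` the map `×L : [M(C)]₂ → [M(C)]₃` is not injective; in particular
`M(C)` fails the WLP from degree 2 to degree 3. -/
theorem stmt_16 {K : Type} [Field K] [IsAlgClosed K] [CharZero K]
    (s : ℕ) (hs : 10 ≤ s) (a b : Fin (s - 2) → K)
    (hnz : ∀ i, (a i, b i) ≠ (0, 0))
    (hdist : ∀ i j, i ≠ j → a i * b j - a j * b i ≠ 0)
    (m m' : Fin 2 → Rp K)
    (hm : ∀ j, m j ∈ homogeneousSubmodule (Fin 4) K 1)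
    (hm' : ∀ j, m' j ∈ homogeneousSubmodule (Fin 4) K 1)
    (hind : ∀ j, LinearIndependent K ![m j, m' j])
    -- neither extra line lies on the quadric
    (hnotQ : ∀ j, (X 0 * X 3 - X 1 * X 2 : Rp K) ∉ Ideal.span {m j, m' j})
    -- the extra lines are skew to each line on the quadric
    (hskew1 : ∀ i j, Submodule.span K {C (b i) * X 0 - C (a i) * X 1,
        C (b i) * X 2 - C (a i) * X 3, m j, m' j} = homogeneousSubmodule (Fin 4) K 1)
    -- the two extra lines are skew to each other
    (hskew2 : ∀ j j', j ≠ j' → Submodule.span K {m j, m' j, m j', m' j'} =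
        homogeneousSubmodule (Fin 4) K 1) :
    finrank K (HRcomp (Sum.elim (fun i : Fin (s - 2) => quadLine (a i) (b i))
        (fun j : Fin 2 => Ideal.span {m j, m' j})) 2) = 3 * s - 10 ∧
    finrank K (HRcomp (Sum.elim (fun i : Fin (s - 2) => quadLine (a i) (b i))
        (fun j : Fin 2 => Ideal.span {m j, m' j})) 3) = 4 * s - 20 ∧
    3 * s - 10 ≤ 4 * s - 20 ∧
    (∀ L ∈ homogeneousSubmodule (Fin 4) K 1,
      ∃ x ∈ HRcomp (Sum.elim (fun i : Fin (s - 2) => quadLine (a i) (b i))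
        (fun j : Fin 2 => Ideal.span {m j, m' j})) 2, x ≠ 0 ∧ L • x = 0) := by
  obtain ⟨n, rfl⟩ : ∃ n, s = n + 2 := ⟨s - 2, by omega⟩
  obtain ⟨h2, h3, hL⟩ := stmt_aux n (by omega) a b hnz hdist m m' hnotQ hskew1 hskew2 _ rfl
  exact ⟨h2, h3, by omega, hL⟩
end
end

section
/- Let n ≥ 3 and d ≥ n. There exist homogeneous forms g₀,…,g_n ∈ K[s,u] of degree d with no common zero in K² ∖ {(0,0)}, linearly independent over K, such that the induced map ℙ¹(K) → ℙⁿ(K) is injective (i.e., for [s₀:u₀] ≠ [s₁:u₁] the vectors (g₀,…,g_n) evaluated at the two points are not proportional), and scalars c₀,…,c_n ∈ K, such that the following holds: defining for each t ≥ 0 the K-linear map φ_t : [K[x₀,…,x_n]]_t → [K[s,u]]_{dt} by φ_t(F) = F(g₀,…,g_n) and M_t := coker(φ_t), the map M_{t−1} → M_t induced by multiplication by g := c₀g₀ + … + c_ng_n has maximal rank (is injective or surjective) for every t ≥ 1. (This is the existential formulation of: the Hartshorne–Rao module of a general nondegenerate rational curve of degree d in ℙⁿ has the Weak Lefschetz Property,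 using that for a smooth rational curve C parametrized by (g₀:…:g_n) one has [M(C)]_t = coker φ_t and the action of the linear form Σcᵢxᵢ is multiplication by Σcᵢgᵢ.) -/
/-!
Multiplication by `g_n` on `M = coker φ` is controlled by the hyperplane section `x_n = 0`.
If `g_n` has `d` distinct roots `a_i`, then reduction modulo `x_n` and modulo `g_n` compares
`φ_{t+1}` with the evaluation map `[K[x₀,…,x_{n-1}]]_{t+1} → K^d` at the `d` points
`p_i = (g₀(a_i,1), …, g_{n-1}(a_i,1))`. When this evaluation is injective, so is
`M_t → M_{t+1}`; when it is surjective, so is `M_t → M_{t+1}` (`wlp_of_maximalRank`). No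
information on the rank of `φ_t` itself is needed.

By Lagrange interpolation the points `p_i` can be prescribed freely. With
`p_i = (b₀^i, …, b_{n-1}^i)`, `0 ≤ i < d`, the monomial `x^m` takes the value `(b^m)^i` at `p_i`, so
the evaluation matrix is a Vandermonde matrix with nodes `b^m`. For `b₀ = 1` and `b₁, b₂, …`
distinct primes these nodes are distinct among monomials of equal degree, by unique factorization,
and the rank is maximal in every degree (`maximalRank_geometricPoints`).

Taking moreover `a_i = b₁^i`, the interpolating polynomials of degree `< d` for the first two
coordinates are `1` and `X`. Hence `g₀ = u^d` and `g₁ = s u^{d-1}`, so the curve is injective on the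
chart `u ≠ 0`, whose complement `[1 : 0]` goes to `[0 : … : 0 : 1]`. Independence of the `g_j` follows
from the same Vandermonde argument, since the `b_j` are distinct and `n ≤ d`.
-/

open MvPolynomial Module

noncomputable section

/-- The image of `φ_t : [K[x₀,…,x_n]]_t → K[s,u]`, `F ↦ F(g₀,…,g_n)`; for `g`
homogeneous of degree `d` it is a subspace of `[K[s,u]]_{dt}`, and
`M_t = coker φ_t = [K[s,u]]_{dt} / subImage g t`. -/
def subImage {K : Type} [Field K] {n : ℕ} (g : Fin (n + 1) → MvPolynomial (Fin 2) K)
    (t : ℕ) : Submodule K (MvPolynomial (Fin 2) K) :=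
  Submodule.map (aeval g).toLinearMap (homogeneousSubmodule (Fin (n + 1)) K t)

/-! ### Vandermonde systems -/

/-- A Vandermonde system with distinct nodes `ν m` and at least as many equations as nodes has only
the zero solution: pairing with the Lagrange basis polynomials isolates each coefficient. -/
theorem coeff_eq_zero_of_sum_mul_pow_eq_zero {K ι : Type*} [Field K] {S : Finset ι} {ν : ι → K}
    (hν : Set.InjOn ν S) {d : ℕ} (hS : S.card ≤ d) {c : ι → K}
    (h : ∀ i < d, ∑ m ∈ S, c m * ν m ^ i = 0) : ∀ m ∈ S, c m = 0 := by
  classical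
  intro m hm
  have key : ∀ p : Polynomial K, p.natDegree < d → ∑ k ∈ S, c k * p.eval (ν k) = 0 := by
    intro p hp
    simp_rw [Polynomial.eval_eq_sum_range' hp, Finset.mul_sum]
    rw [Finset.sum_comm]
    refine Finset.sum_eq_zero fun i hi => ?_
    have := congrArg (p.coeff i * ·) (h i (Finset.mem_range.mp hi))
    simp only [Finset.mul_sum, mul_zero] at this
    rw [← this]
    exact Finset.sum_congr rfl fun _ _ => by ring
  have hpos : 0 < S.card := Finset.card_pos.mpr ⟨m, hm⟩
  have h1 := key (Lagrange.basis S ν m) (by rw [Lagrange.natDegree_basis hν hm]; omega)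
  rw [Finset.sum_eq_single m, Lagrange.eval_basis_self hν hm, mul_one] at h1
  · exact h1
  · intro k hk hkm
    rw [Lagrange.eval_basis_of_ne hkm.symm hk, mul_zero]
  · exact fun hm' => absurd hm hm'

/-- A Vandermonde system with distinct nodes `ν m` and at most as many equations as nodes is
solvable for every right-hand side. The solution is the linear functional `X ^ k ↦ w k` applied to
the Lagrange basis polynomials, because these interpolate `X ^ i`. -/
theorem exists_sum_mul_pow_eq {K ι : Type*} [Field K] {S : Finset ι} {ν : ι → K}
    (hν : Set.InjOn ν S) {d : ℕ} (hS : d ≤ S.card) (w : ℕ → K) :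
    ∃ c : ι → K, ∀ i < d, ∑ m ∈ S, c m * ν m ^ i = w i := by
  classical
  let L : Polynomial K →ₗ[K] K := Polynomial.lsum fun k => LinearMap.mulRight K (w k)
  refine ⟨fun m => L (Lagrange.basis S ν m), fun i hi => ?_⟩
  have hX : (Polynomial.X ^ i : Polynomial K) = Lagrange.interpolate S ν fun m => ν m ^ i :=
    Lagrange.eq_interpolate_of_eval_eq _ hν
      (by rw [Polynomial.degree_X_pow]; exact_mod_cast hi.trans_le hS) (by simp)
  have hL : L (Polynomial.X ^ i) = w i := by
    simp [L, Polynomial.lsum_apply, Polynomial.X_pow_eq_monomial, Polynomial.sum_monomial_index]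
  rw [← hL, hX, Lagrange.interpolate_apply, map_sum]
  refine Finset.sum_congr rfl fun m _ => ?_
  rw [Polynomial.C_mul', map_smul, smul_eq_mul, mul_comm]

/-! ### Multiplicatively independent bases -/

/-- The sequence `1, p₁, p₂, …` of `1` followed by distinct primes (`3, 5, 7, …`, the primes of index
`≥ 1`). Taking the term of index `0` to be `1` keeps the values of monomials of a fixed degree
distinct. -/
def base (j : ℕ) : ℕ := if j = 0 then 1 else Nat.nth Nat.Prime j

theorem base_ne_zero (j : ℕ) : base j ≠ 0 := by
  unfold base
  split_ifs
  · exact one_ne_zero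
  · exact (Nat.prime_nth_prime j).ne_zero

theorem factorization_base {j k : ℕ} (hk : k ≠ 0) :
    (base j).factorization (Nat.nth Nat.Prime k) = if j = k then 1 else 0 := by
  unfold base
  rcases eq_or_ne j 0 with rfl | hj
  · simp [hk.symm]
  · rw [if_neg hj, (Nat.prime_nth_prime j).factorization, Finsupp.single_apply]
    simp only [(Nat.nth_injective Nat.infinite_setOfPred_prime).eq_iff]

/-- Distinct monomials of the same degree take distinct values at `(base 0, …, base (n-1))`: the
exponents of positive index are read off from the prime factorization, and the degree then
determines the exponent of index `0`. -/
theorem prod_base_injOn {n t : ℕ} {m m' : Fin n →₀ ℕ} (hm : m.degree = t) (hm' : m'.degree = t)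
    (h : ∏ j : Fin n, base j ^ m j = ∏ j : Fin n, base j ^ m' j) : m = m' := by
  have hf : ∀ (m : Fin n →₀ ℕ) (k : Fin n), (k : ℕ) ≠ 0 →
      (∏ j : Fin n, base j ^ m j).factorization (Nat.nth Nat.Prime k) = m k := by
    intro m k hk
    rw [Nat.factorization_prod_apply fun (j : Fin n) _ => pow_ne_zero (m j) (base_ne_zero j)]
    simp [Nat.factorization_pow, factorization_base hk, ← Fin.ext_iff]
  have hpos : ∀ k : Fin n, (k : ℕ) ≠ 0 → m k = m' k := fun k hk => by
    rw [← hf m k hk, ← hf m' k hk, h]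
  ext k
  rcases n with _ | n
  · exact k.elim0
  rw [Finsupp.degree_eq_sum, Fin.sum_univ_succ] at hm hm'
  have hs : ∑ i : Fin n, m i.succ = ∑ i : Fin n, m' i.succ :=
    Finset.sum_congr rfl fun i _ => hpos _ (by simp)
  rcases Fin.eq_zero_or_eq_succ k with rfl | ⟨i, rfl⟩
  · omega
  · exact hpos _ (by simp)

/-! ### Reduction to the hyperplane section -/

theorem natDegree_dehomogenize_le {K : Type*} [Field K] {D : ℕ} {z : MvPolynomial (Fin 2) K}
    (hz : z.IsHomogeneous D) :
    (aeval ![(Polynomial.X : Polynomial K), 1] z).natDegree ≤ D := by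
  rw [z.as_sum, map_sum]
  refine Polynomial.natDegree_sum_le_of_forall_le _ _ fun m hm => ?_
  have := hz.degree_eq_sum_deg_support hm
  rw [aeval_monomial, Finsupp.prod_fintype _ _ (by simp)]
  simp only [Fin.prod_univ_two, Matrix.cons_val_zero, Matrix.cons_val_one, one_pow, mul_one]
  refine (Polynomial.natDegree_C_mul_X_pow_le _ _).trans ?_
  rw [← Finsupp.degree_apply, Finsupp.degree_eq_sum, Fin.sum_univ_two] at this
  omega

/-- A binary form vanishing at the distinct points `[a i : 1]`, `i < d`, is divisible by the form
`∏ (s - a i u)`, with a quotient that is again a form. -/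
theorem exists_eq_nodal_mul {K : Type*} [Field K] {d t : ℕ} {a : ℕ → K}
    (ha : Set.InjOn a (Finset.range d)) {z : MvPolynomial (Fin 2) K}
    (hz : z.IsHomogeneous (d * (t + 1)))
    (h0 : ∀ i < d, aeval ![a i, 1] z = 0) :
    ∃ y : MvPolynomial (Fin 2) K, y.IsHomogeneous (d * t) ∧
      z = (Lagrange.nodal (Finset.range d) a).homogenize d * y := by
  set θ := aeval ![(Polynomial.X : Polynomial K), 1] z with hθ
  set N := Lagrange.nodal (Finset.range d) a with hN
  have hmon : N.Monic := Lagrange.nodal_monic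
  have hNd : N.natDegree = d := by simp [hN, Lagrange.natDegree_nodal]
  have hdvd : N ∣ θ := by
    rw [← Polynomial.modByMonic_eq_zero_iff_dvd hmon]
    refine Polynomial.eq_zero_of_degree_lt_of_eval_index_eq_zero _ ha ?_ fun i hi => ?_
    · have := Polynomial.degree_modByMonic_lt θ hmon
      rwa [hN, Lagrange.degree_nodal, ← hN] at this
    · have := congrArg (Polynomial.eval (a i)) (Polynomial.modByMonic_add_div θ N)
      rw [Polynomial.eval_add, Polynomial.eval_mul, hN, Lagrange.eval_nodal_at_node hi, zero_mul,
        add_zero] at this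
      rw [this, hθ, ← Polynomial.coe_aeval_eq_eval, ← AlgHom.comp_apply, comp_aeval,
        ← h0 i (Finset.mem_range.mp hi)]
      congr 2
      ext k
      fin_cases k <;> simp
  obtain ⟨q, hq⟩ := hdvd
  have hqd : q.natDegree ≤ d * t := by
    have h1 := natDegree_dehomogenize_le hz
    rw [← hθ, hq] at h1
    rcases eq_or_ne q 0 with rfl | hq0
    · simp
    rw [Polynomial.natDegree_mul hmon.ne_zero hq0, hNd, mul_add, mul_one] at h1
    omega
  refine ⟨q.homogenize (d * t), Polynomial.isHomogeneous_homogenize q, ?_⟩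
  rw [← Polynomial.homogenize_mul N q hNd.le hqd, ← hq, add_comm, ← Nat.mul_succ]
  exact (Polynomial.homogenize_eq_of_isHomogeneous hz hθ.symm).symm

/-- A form is the sum of a form in the first `n` variables and a multiple of the last variable. -/
theorem exists_eq_rename_add {K : Type*} [Field K] {n t : ℕ}
    {F : MvPolynomial (Fin (n + 1)) K} (hF : F.IsHomogeneous (t + 1)) :
    ∃ (F₀ : MvPolynomial (Fin n) K) (F₁ : MvPolynomial (Fin (n + 1)) K),
      F₀.IsHomogeneous (t + 1) ∧ F₁.IsHomogeneous t ∧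
        F = rename Fin.castSucc F₀ + X (Fin.last n) * F₁ := by
  suffices h : F ∈ (homogeneousSubmodule (Fin n) K (t + 1)).map
        (rename (Fin.castSucc : Fin n → Fin (n + 1))).toLinearMap ⊔
      (homogeneousSubmodule (Fin (n + 1)) K t).map (LinearMap.mulLeft K (X (Fin.last n))) by
    obtain ⟨_, ⟨F₀, h₀, rfl⟩, _, ⟨F₁, h₁, rfl⟩, h⟩ := Submodule.mem_sup.mp h
    exact ⟨F₀, F₁, h₀, h₁, h.symm⟩
  rw [F.as_sum]
  refine Submodule.sum_mem _ fun m hm => ?_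
  have hdeg : m.degree = t + 1 := (hF.degree_eq_sum_deg_support hm).symm
  rcases Nat.eq_zero_or_pos (m (Fin.last n)) with h0 | hpos
  · refine Submodule.mem_sup_left ⟨monomial (m.comapDomain Fin.castSucc
      (Fin.castSucc_injective n).injOn) (F.coeff m), isHomogeneous_monomial _ ?_, ?_⟩
    · rw [Finsupp.degree_eq_sum, Fin.sum_univ_castSucc, h0, add_zero] at hdeg
      simpa [Finsupp.degree_eq_sum] using hdeg
    · simp only [AlgHom.toLinearMap_apply, rename_monomial]
      congr 2
      refine Finsupp.mapDomain_comapDomain _ (Fin.castSucc_injective n) _ fun k hk => ?_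
      rcases Fin.eq_castSucc_or_eq_last k with ⟨i, rfl⟩ | rfl
      · exact ⟨i, rfl⟩
      · exact absurd h0 (Finsupp.mem_support_iff.mp hk)
  · have hle : Finsupp.single (Fin.last n) 1 ≤ m := Finsupp.single_le_iff.mpr hpos
    refine Submodule.mem_sup_right ⟨monomial (m - Finsupp.single (Fin.last n) 1) (F.coeff m),
      isHomogeneous_monomial _ ?_, ?_⟩
    · have := congrArg Finsupp.degree (add_tsub_cancel_of_le hle)
      rw [map_add, Finsupp.degree_single, hdeg] at this
      omega
    · simp only [LinearMap.mulLeft_apply, X, monomial_mul, one_mul, add_tsub_cancel_of_le hle]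

/-- Suppose `g_n` has the distinct roots `[a i : 1]`, `i < d`. If forms of degree `t + 1` in `n`
variables have maximal rank on the points `(g₀, …, g_{n-1})(a i, 1)`, then multiplication by `g_n`
from `M_t` to `M_{t+1}` has maximal rank. -/
theorem wlp_of_maximalRank {K : Type} [Field K] {n d t : ℕ} {a : ℕ → K}
    (ha : Set.InjOn a (Finset.range d)) {P : Fin n → Polynomial K}
    (hP : ∀ j, (P j).natDegree ≤ d) {g : Fin (n + 1) → MvPolynomial (Fin 2) K}
    (hg : ∀ j : Fin n, g j.castSucc = (P j).homogenize d)
    (hgl : g (Fin.last n) = (Lagrange.nodal (Finset.range d) a).homogenize d)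
    (hrank : (∀ F : MvPolynomial (Fin n) K, F.IsHomogeneous (t + 1) →
          (∀ i < d, aeval (fun j => (P j).eval (a i)) F = 0) → F = 0) ∨
        (∀ w : ℕ → K, ∃ F : MvPolynomial (Fin n) K, F.IsHomogeneous (t + 1) ∧
          ∀ i < d, aeval (fun j => (P j).eval (a i)) F = w i)) :
    (∀ y ∈ homogeneousSubmodule (Fin 2) K (d * t),
        g (Fin.last n) * y ∈ subImage g (t + 1) → y ∈ subImage g t) ∨
      (∀ z ∈ homogeneousSubmodule (Fin 2) K (d * (t + 1)),
        ∃ y ∈ homogeneousSubmodule (Fin 2) K (d * t),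
          z - g (Fin.last n) * y ∈ subImage g (t + 1)) := by
  have hNd : (Lagrange.nodal (Finset.range d) a).natDegree ≤ d := by
    simp [Lagrange.natDegree_nodal]
  have hev : ∀ (i : ℕ) (F : MvPolynomial (Fin n) K),
      aeval ![a i, 1] (aeval g (rename Fin.castSucc F)) =
        aeval (fun j => (P j).eval (a i)) F := by
    intro i F
    rw [aeval_rename, ← AlgHom.comp_apply, comp_aeval]
    congr 2
    ext j
    simp [hg, Polynomial.aeval_homogenize_of_eq_one (hP j)]
  have hevl : ∀ i < d, aeval ![a i, 1] (g (Fin.last n)) = 0 := by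
    intro i hi
    rw [hgl, Polynomial.aeval_homogenize_of_eq_one hNd _ (by simp)]
    simpa using Lagrange.eval_nodal_at_node (Finset.mem_range.mpr hi)
  have hgl0 : g (Fin.last n) ≠ 0 := by
    rw [hgl, Ne, Polynomial.homogenize_eq_zero_iff hNd]
    exact Lagrange.nodal_ne_zero
  have hghom : ∀ i, (g i).IsHomogeneous d := by
    intro i
    rcases Fin.eq_castSucc_or_eq_last i with ⟨j, rfl⟩ | rfl
    · rw [hg]; exact Polynomial.isHomogeneous_homogenize _
    · rw [hgl]; exact Polynomial.isHomogeneous_homogenize _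
  rcases hrank with hinj | hsurj
  · left
    rintro y - ⟨F, hF, hFy⟩
    obtain ⟨F₀, F₁, h₀, h₁, rfl⟩ := exists_eq_rename_add hF
    rw [AlgHom.toLinearMap_apply, map_add, map_mul, aeval_X] at hFy
    -- At the roots of `g_n` only the part of `F` free of `x_n` survives.
    have hF₀ : F₀ = 0 := hinj F₀ h₀ fun i hi => by
      have := congrArg (aeval ![a i, 1]) hFy
      rwa [map_add, hev, map_mul, map_mul, hevl i hi, zero_mul, zero_mul, add_zero] at this
    rw [hF₀, map_zero, map_zero, zero_add] at hFy
    exact ⟨F₁, h₁, mul_left_cancel₀ hgl0 hFy⟩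
  · right
    intro z hz
    obtain ⟨F, hF, hFz⟩ := hsurj fun i => aeval ![a i, 1] z
    have hF' : (rename Fin.castSucc F : MvPolynomial (Fin (n + 1)) K).IsHomogeneous (t + 1) :=
      hF.rename_isHomogeneous
    obtain ⟨y, hy, hzy⟩ := exists_eq_nodal_mul ha
      (z := z - aeval g (rename Fin.castSucc F)) (hz.sub (hF'.aeval g hghom)) fun i hi => by
        rw [map_sub, hev, hFz i hi, sub_self]
    -- `z` minus a form in `g₀, …, g_{n-1}` with the same values at the roots is `g_n * y`.
    refine ⟨y, hy, rename Fin.castSucc F, hF', ?_⟩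
    rw [AlgHom.toLinearMap_apply, hgl, ← hzy, sub_sub_cancel]

/-! ### Points with maximal rank in every degree -/

/-- The evaluation of forms of degree `t` at the points `(base 0 ^ i, …, base (n-1) ^ i)`, `i < d`, is
injective or surjective. -/
theorem maximalRank_geometricPoints {K : Type*} [Field K] [CharZero K] (n d t : ℕ) :
    (∀ F : MvPolynomial (Fin n) K, F.IsHomogeneous t →
        (∀ i < d, aeval (fun j : Fin n => (base j : K) ^ i) F = 0) → F = 0) ∨
      (∀ w : ℕ → K, ∃ F : MvPolynomial (Fin n) K, F.IsHomogeneous t ∧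
        ∀ i < d, aeval (fun j : Fin n => (base j : K) ^ i) F = w i) := by
  classical
  set S : Finset (Fin n →₀ ℕ) := Finset.finsuppAntidiag Finset.univ t with hS
  have hmem : ∀ m : Fin n →₀ ℕ, m ∈ S ↔ m.degree = t := by
    intro m
    simp [hS, Finsupp.degree_eq_sum]
  let ν : (Fin n →₀ ℕ) → K := fun m => ((∏ j : Fin n, base j ^ m j : ℕ) : K)
  have hν : Set.InjOn ν S := fun m hm m' hm' h =>
    prod_base_injOn ((hmem m).mp hm) ((hmem m').mp hm') (Nat.cast_injective h)
  have hmon : ∀ (i : ℕ) (m : Fin n →₀ ℕ) (c : K),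
      aeval (fun j : Fin n => (base j : K) ^ i) (monomial m c) = c * ν m ^ i := by
    intro i m c
    rw [aeval_monomial, Finsupp.prod_fintype _ _ (by simp)]
    simp [ν, ← pow_mul, mul_comm, ← Finset.prod_pow]
  rcases le_total S.card d with hle | hle
  · left
    intro F hF h
    have hsub : F.support ⊆ S := fun m hm =>
      (hmem m).mpr (hF.degree_eq_sum_deg_support hm).symm
    have h' := coeff_eq_zero_of_sum_mul_pow_eq_zero hν hle (c := fun m => F.coeff m)
      fun i hi => by
        rw [← h i hi]
        conv_rhs => rw [F.as_sum, map_sum]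
        simp_rw [hmon]
        refine (Finset.sum_subset hsub fun m _ hm => ?_).symm
        rw [notMem_support_iff.mp hm, zero_mul]
    ext m
    by_cases hm : m ∈ S
    · simpa using h' m hm
    · simpa using notMem_support_iff.mp fun hm' => hm (hsub hm')
  · right
    intro w
    obtain ⟨c, hc⟩ := exists_sum_mul_pow_eq hν hle w
    refine ⟨∑ m ∈ S, monomial m (c m), IsHomogeneous.sum _ _ _ fun m hm =>
      isHomogeneous_monomial _ ((hmem m).mp hm), fun i hi => ?_⟩
    rw [map_sum, ← hc i hi]
    exact Finset.sum_congr rfl fun m _ => hmon i m _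

/-! ### The curve -/

/-- The Hartshorne–Rao module of a general nondegenerate rational curve of degree
`d ≥ n` in `ℙⁿ` has the WLP (existential formulation): there are degree-`d` binary
forms `g₀,…,g_n` with no common zero, linearly independent, parametrizing an
injective map `ℙ¹ → ℙⁿ`, and scalars `c₀,…,c_n`, such that with
`M_t = coker([K[x]]_t → [K[s,u]]_{dt})`, the map `M_{t-1} → M_t` induced by
multiplication by `g = ∑ cᵢ gᵢ` is injective or surjective for every `t ≥ 1`.
(Injectivity/surjectivity of the induced maps on cokernels is expressed at the
level of the graded pieces `[K[s,u]]_{d t}` modulo the images `subImage g t`.) -/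
theorem stmt_17 {K : Type} [Field K] [IsAlgClosed K] [CharZero K]
    (n d : ℕ) (hn : 3 ≤ n) (hd : n ≤ d) :
    ∃ (g : Fin (n + 1) → MvPolynomial (Fin 2) K) (c : Fin (n + 1) → K),
      (∀ i, (g i).IsHomogeneous d) ∧
      -- no common zero on K² \ {0}
      (∀ v : Fin 2 → K, v ≠ 0 → ∃ i, aeval v (g i) ≠ 0) ∧
      -- nondegenerate: the forms are linearly independent
      LinearIndependent K g ∧
      -- the induced map ℙ¹ → ℙⁿ is injective
      (∀ v w : Fin 2 → K, v ≠ 0 → w ≠ 0 → (∀ e : K, w ≠ e • v) →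
        ∀ e : K, (fun i => aeval w (g i)) ≠ e • (fun i => aeval v (g i))) ∧
      -- ×g : M_{t-1} → M_t has maximal rank for every t ≥ 1
      (∀ t : ℕ,
        (∀ y ∈ homogeneousSubmodule (Fin 2) K (d * t),
          (∑ i, c i • g i) * y ∈ subImage g (t + 1) → y ∈ subImage g t) ∨
        (∀ z ∈ homogeneousSubmodule (Fin 2) K (d * (t + 1)),
          ∃ y ∈ homogeneousSubmodule (Fin 2) K (d * t),
            z - (∑ i, c i • g i) * y ∈ subImage g (t + 1))) := by
  classical
  have hb : ∀ j, 0 < j → 1 < base j := fun j hj => by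
    rw [base, if_neg hj.ne']
    exact (Nat.prime_nth_prime j).one_lt
  have hbinj : Function.Injective fun j : Fin n => (base j : K) := by
    intro j k hjk
    have hjk' : base j = base k := Nat.cast_injective hjk
    have := prod_base_injOn (m := Finsupp.single j 1) (m' := Finsupp.single k 1) (t := 1)
      (Finsupp.degree_single _ _) (Finsupp.degree_single _ _)
      (by simpa [Finsupp.single_apply, Finset.prod_ite_eq, pow_ite] using hjk')
    exact Finsupp.single_left_injective one_ne_zero this
  -- With these roots the identity `X` interpolates `i ↦ base 1 ^ i`, which makes `P j₁ = X`.
  let a : ℕ → K := fun i => (base 1 : K) ^ i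
  have ha : Set.InjOn a (Finset.range d) := by
    intro i _ k _ h
    have h' : base 1 ^ i = base 1 ^ k := by
      apply Nat.cast_injective (R := K)
      simpa [a] using h
    exact Nat.pow_right_injective (hb 1 one_pos) h'
  let P : Fin n → Polynomial K := fun j =>
    Lagrange.interpolate (Finset.range d) a fun i => (base j : K) ^ i
  let N := Lagrange.nodal (Finset.range d) a
  have hPe : ∀ j, ∀ i < d, (P j).eval (a i) = (base j : K) ^ i := fun j i hi =>
    Lagrange.eval_interpolate_at_node _ ha (Finset.mem_range.mpr hi)
  have hPdeg : ∀ j, (P j).degree < d := fun j => by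
    simpa only [Finset.card_range] using
      Lagrange.degree_interpolate_lt (fun i => (base j : K) ^ i) ha
  have hPd : ∀ j, (P j).natDegree ≤ d := fun j =>
    Polynomial.natDegree_le_of_degree_le (hPdeg j).le
  have hNd : N.natDegree = d := by simp [N, Lagrange.natDegree_nodal]
  let j₀ : Fin n := ⟨0, by omega⟩
  let j₁ : Fin n := ⟨1, by omega⟩
  have hP₀ : P j₀ = 1 := by
    symm
    refine Lagrange.eq_interpolate_of_eval_eq _ ha ?_ ?_
    · rw [Polynomial.degree_one, Finset.card_range]; exact_mod_cast (by omega : 0 < d)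
    · intro i _; simp [j₀, base]
  have hP₁ : P j₁ = Polynomial.X := by
    symm
    refine Lagrange.eq_interpolate_of_eval_eq _ ha ?_ ?_
    · rw [Polynomial.degree_X, Finset.card_range]; exact_mod_cast (by omega : 1 < d)
    · intro i _; simp [j₁, a]
  let g : Fin (n + 1) → MvPolynomial (Fin 2) K :=
    Fin.snoc (α := fun _ => MvPolynomial (Fin 2) K) (fun j => (P j).homogenize d) (N.homogenize d)
  have hg : ∀ j : Fin n, g j.castSucc = (P j).homogenize d := fun j => by simp [g]
  have hgl : g (Fin.last n) = N.homogenize d := by simp [g]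
  have hg₀ : ∀ v : Fin 2 → K, aeval v (g j₀.castSucc) = v 1 ^ d := fun v => by
    rw [hg, hP₀]; simp
  have hg₁ : ∀ v : Fin 2 → K, aeval v (g j₁.castSucc) = v 0 * v 1 ^ (d - 1) := fun v => by
    rw [hg, hP₁, Polynomial.homogenize_X (by omega)]; simp
  have hglv : ∀ v : Fin 2 → K, v 1 = 0 → aeval v (g (Fin.last n)) = v 0 ^ d := fun v hv => by
    have h := Polynomial.homogenize_finsetProd (s := Finset.range d)
      (p := fun i => Polynomial.X - Polynomial.C (a i)) (n := fun _ => 1)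
      fun i _ => (Polynomial.natDegree_X_sub_C _).le
    rw [← Lagrange.nodal_eq, Finset.sum_const, Finset.card_range, smul_eq_mul, mul_one] at h
    rw [hgl, h, map_prod]
    simp [hv]
  refine ⟨g, Pi.single (Fin.last n) 1, ?_, ?_, ?_, ?_, ?_⟩
  · intro i
    rcases Fin.eq_castSucc_or_eq_last i with ⟨j, rfl⟩ | rfl
    · rw [hg]; exact Polynomial.isHomogeneous_homogenize _
    · rw [hgl]; exact Polynomial.isHomogeneous_homogenize _
  · intro v hv
    by_cases h1 : v 1 = 0
    · refine ⟨Fin.last n, ?_⟩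
      rw [hglv v h1]
      refine pow_ne_zero _ fun h0 => hv ?_
      ext k
      fin_cases k <;> simp [h0, h1]
    · exact ⟨j₀.castSucc, by rw [hg₀]; exact pow_ne_zero _ h1⟩
  · rw [Fintype.linearIndependent_iff]
    intro c hc
    rw [Fin.sum_univ_castSucc] at hc
    simp_rw [hg, hgl] at hc
    -- After dehomogenizing, evaluation at the roots of `N` kills the last term and leaves a
    -- Vandermonde system with the distinct nodes `base j`.
    have hc' : ∑ j : Fin n, c j.castSucc • P j + c (Fin.last n) • N = 0 := by
      have := congrArg (aeval ![(Polynomial.X : Polynomial K), 1]) hc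
      simpa [Polynomial.aeval_homogenize_X_one _ (hPd _),
        Polynomial.aeval_homogenize_X_one _ hNd.le] using this
    have hcj : ∀ j : Fin n, c j.castSucc = 0 := by
      have := coeff_eq_zero_of_sum_mul_pow_eq_zero (S := Finset.univ) hbinj.injOn
        (by simpa using hd) (c := fun j : Fin n => c j.castSucc) fun i hi => by
          have := congrArg (Polynomial.eval (a i)) hc'
          simpa [Polynomial.eval_finsetSum, hPe _ i hi, N,
            Lagrange.eval_nodal_at_node (Finset.mem_range.mpr hi)] using this
      exact fun j => this j (Finset.mem_univ j)
    intro i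
    rcases Fin.eq_castSucc_or_eq_last i with ⟨j, rfl⟩ | rfl
    · exact hcj j
    · have hN0 : N ≠ 0 := Lagrange.nodal_ne_zero
      simpa [hcj, hN0] using hc'
  · intro v w hv hw hvw e he
    have he' : ∀ i, aeval w (g i) = e * aeval v (g i) := fun i => congrFun he i
    have h0 := he' j₀.castSucc
    have h1 := he' j₁.castSucc
    rw [hg₀, hg₀] at h0
    rw [hg₁, hg₁] at h1
    have hv0 : v 1 = 0 → v 0 ≠ 0 := fun h hz => hv (by ext k; fin_cases k <;> simp [h, hz])
    -- On the chart `u ≠ 0` the ratio `g₁ / g₀ = s / u` recovers the point; at `[1 : 0]` only `g_n`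
    -- among `g₀`, `g_n` is nonzero.
    by_cases hw1 : w 1 = 0
    · by_cases hv1 : v 1 = 0
      · refine hvw (w 0 / v 0) ?_
        ext k
        fin_cases k
        · simp [hv0 hv1]
        · simp [hw1, hv1]
      · have he0 : e = 0 := by
          rw [hw1, zero_pow (by omega)] at h0
          exact (mul_eq_zero.mp h0.symm).resolve_right (pow_ne_zero _ hv1)
        have h2 := he' (Fin.last n)
        rw [hglv w hw1, he0, zero_mul] at h2
        have hw0 : w 0 = 0 := pow_eq_zero_iff (by omega) |>.mp h2
        exact hw (by ext k; fin_cases k <;> simp [hw0, hw1])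
    · have hv1 : v 1 ≠ 0 := fun hv1 => hw1 <| by
        rw [hv1, zero_pow (by omega), mul_zero] at h0
        exact pow_eq_zero_iff (by omega) |>.mp h0
      refine hvw (w 1 / v 1) ?_
      have hpow : ∀ x : K, x ^ d = x ^ (d - 1) * x := fun x => by
        rw [← pow_succ, Nat.sub_add_cancel (by omega)]
      have key : w 0 * v 1 = v 0 * w 1 := by
        rw [hpow, hpow] at h0
        have hp : w 1 ^ (d - 1) ≠ 0 := pow_ne_zero _ hw1
        refine mul_right_cancel₀ hp ?_
        linear_combination v 1 * h1 - v 0 * h0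
      ext k
      fin_cases k
      · simp only [Fin.zero_eta, Pi.smul_apply, smul_eq_mul]
        field_simp
        linear_combination key
      · simp [hv1]
  · intro t
    have hsum : ∑ i, (Pi.single (Fin.last n) (1 : K) : Fin (n + 1) → K) i • g i =
        g (Fin.last n) := by
      simp [Pi.single_apply]
    rw [hsum]
    refine wlp_of_maximalRank ha hPd hg hgl ?_
    have h := maximalRank_geometricPoints (K := K) n d (t + 1)
    have hfun : ∀ i < d, (fun j => (P j).eval (a i)) = fun j : Fin n => (base j : K) ^ i :=
      fun i hi => funext fun j => hPe j i hi
    rcases h with h | h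
    · exact Or.inl fun F hF hF0 => h F hF fun i hi => by rw [← hfun i hi]; exact hF0 i hi
    · refine Or.inr fun w => ?_
      obtain ⟨F, hF, hFw⟩ := h w
      exact ⟨F, hF, fun i hi => by rw [hfun i hi]; exact hFw i hi⟩
end
end
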